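/- Let g ≥ 1 and let V = ℚ^(2g) with standard basis vectors a_1, b_1, …, a_g, b_g and the standard symplectic form ω determined by ω(a_i, b_i) = 1, ω(a_i, a_j) = ω(b_i, b_j) = 0 for all i, j, and ω(a_i, b_j) = 0 for i ≠ j. For c ∈ V define the symplectic transvection T_c(x) = x + ω(x,c)·c, whose inverse is T_c^{-1}(x) = x − ω(x,c)·c. Let φ = (T_{b_g} ∘ T_{a_g}^{-1}) ∘ ⋯ ∘ (T_{b_2} ∘ T_{a_2}^{-1}) ∘ T_{a_1}. Then the fixed subspace ker(φ − id) is one-dimensional and equals the span of a_1. -/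

import Mathlib

/-- V = ℚ^(2g), presented as pairs of vectors in ℚ^g (the a-coordinates and b-coordinates). -/
abbrev SpV (g : ℕ) := (Fin g → ℚ) × (Fin g → ℚ)

/-- The standard basis vector a_i (1-indexed in the paper; here `stdA g i` for i : ℕ is the
(i+1)-st such vector, i.e. `stdA g 0` is a₁). -/
def stdA (g : ℕ) (i : ℕ) : SpV g := (fun j => if (j : ℕ) = i then 1 else 0, 0)

/-- The standard basis vector b_i (0-indexed: `stdB g 0` is b₁). -/
def stdB (g : ℕ) (i : ℕ) : SpV g := (0, fun j => if (j : ℕ) = i then 1 else 0)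

/-- The standard symplectic form on ℚ^(2g): ω(aᵢ,bᵢ)=1, ω(aᵢ,aⱼ)=ω(bᵢ,bⱼ)=0,
ω(aᵢ,bⱼ)=0 for i ≠ j. -/
noncomputable def stdSymp (g : ℕ) : SpV g →ₗ[ℚ] SpV g →ₗ[ℚ] ℚ :=
  LinearMap.mk₂ ℚ (fun v w => ∑ i, v.1 i * w.2 i - ∑ i, v.2 i * w.1 i)
    (by intro m₁ m₂ n; simp [add_mul, Finset.sum_add_distrib]; ring)
    (by intro c m n; simp only [Prod.smul_fst, Prod.smul_snd, Pi.smul_apply, smul_eq_mul,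
        Finset.mul_sum, mul_assoc, mul_sub])
    (by intro m n₁ n₂; simp [mul_add, Finset.sum_add_distrib]; ring)
    (by intro c m n; simp only [Prod.smul_fst, Prod.smul_snd, Pi.smul_apply, smul_eq_mul,
        Finset.mul_sum, mul_sub, mul_left_comm])

/-- The symplectic transvection along c: x ↦ x + ω(x,c)·c. -/
noncomputable def Tv (g : ℕ) (c : SpV g) : SpV g →ₗ[ℚ] SpV g :=
  LinearMap.id + LinearMap.smulRight ((stdSymp g).flip c) c

/-- The inverse transvection along c: x ↦ x − ω(x,c)·c. -/
noncomputable def TvInv (g : ℕ) (c : SpV g) : SpV g →ₗ[ℚ] SpV g :=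
  LinearMap.id - LinearMap.smulRight ((stdSymp g).flip c) c

/-- φ = (T_{b_g} ∘ T_{a_g}⁻¹) ∘ ⋯ ∘ (T_{b_2} ∘ T_{a_2}⁻¹) ∘ T_{a_1}, written as a product in
the endomorphism monoid of ℚ^(2g) (multiplication is composition). -/
noncomputable def phi (g : ℕ) : Module.End ℚ (SpV g) :=
  (((List.range g).drop 1).reverse.map
      (fun i => (Tv g (stdB g i)) * (TvInv g (stdA g i)))).prod * Tv g (stdA g 0)

theorem Tv_A_apply (g : ℕ) (i : ℕ) (x : SpV g) (j : Fin g) :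
    (Tv g (stdA g i) x).1 j = (if (j : ℕ) = i then x.1 j - x.2 j else x.1 j) ∧
    (Tv g (stdA g i) x).2 j = x.2 j := by
  by_cases h : (j : ℕ) = i
  · subst h
    simp [Tv, stdSymp, stdA, Fin.val_inj, sub_eq_add_neg]
  · simp [Tv, stdSymp, stdA, h]

theorem TvInv_A_apply (g : ℕ) (i : ℕ) (x : SpV g) (j : Fin g) :
    (TvInv g (stdA g i) x).1 j = (if (j : ℕ) = i then x.1 j + x.2 j else x.1 j) ∧
    (TvInv g (stdA g i) x).2 j = x.2 j := by
  by_cases h : (j : ℕ) = i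
  · subst h
    simp [TvInv, stdSymp, stdA, Fin.val_inj]
  · simp [TvInv, stdSymp, stdA, h]

theorem Tv_B_apply (g : ℕ) (i : ℕ) (x : SpV g) (j : Fin g) :
    (Tv g (stdB g i) x).1 j = x.1 j ∧
    (Tv g (stdB g i) x).2 j = (if (j : ℕ) = i then x.2 j + x.1 j else x.2 j) := by
  by_cases h : (j : ℕ) = i
  · subst h
    simp [Tv, stdSymp, stdB, Fin.val_inj]
  · simp [Tv, stdSymp, stdB, h]

theorem prod_apply_coord (g : ℕ) (l : List ℕ) (hl : l.Nodup) (x : SpV g) (j : Fin g) :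
    ((l.map (fun i => (Tv g (stdB g i) : Module.End ℚ (SpV g)) * (TvInv g (stdA g i)))).prod x).1 j
      = (if (j : ℕ) ∈ l then x.1 j + x.2 j else x.1 j) ∧
    ((l.map (fun i => (Tv g (stdB g i) : Module.End ℚ (SpV g)) * (TvInv g (stdA g i)))).prod x).2 j
      = (if (j : ℕ) ∈ l then x.1 j + 2 * x.2 j else x.2 j) := by
  induction l with
  | nil => simp
  | cons i l ih =>
    obtain ⟨hi, hl⟩ := List.nodup_cons.1 hl
    obtain ⟨h1, h2⟩ := ih hl
    simp only [List.map_cons, List.prod_cons, Module.End.mul_apply, (Tv_B_apply g i _ j).1,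
      (Tv_B_apply g i _ j).2, (TvInv_A_apply g i _ j).1, (TvInv_A_apply g i _ j).2, h1, h2,
      List.mem_cons]
    by_cases h : (j : ℕ) = i
    · have : (j : ℕ) ∉ l := h ▸ hi
      simp only [h, hi, if_true, if_false, true_or]
      exact ⟨trivial, by ring⟩
    · simp [h]

theorem phi_ker (g : ℕ) (hg : 1 ≤ g) :
    LinearMap.ker (phi g - LinearMap.id) = Submodule.span ℚ {stdA g 0} := by
  have hmem : ∀ j : Fin g, (j : ℕ) ∈ ((List.range g).drop 1).reverse ↔ (j : ℕ) ≠ 0 := by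
    intro j
    obtain ⟨n, rfl⟩ : ∃ n, g = n + 1 := ⟨g - 1, by omega⟩
    have := j.2
    simp only [List.mem_reverse, List.range_succ_eq_map, List.drop_succ_cons, List.drop_zero,
      List.mem_map, List.mem_range]
    constructor
    · rintro ⟨a, _, h⟩; omega
    · intro h; exact ⟨j - 1, by omega, by omega⟩
  have hnd : ((List.range g).drop 1).reverse.Nodup :=
    List.nodup_reverse.2 (List.nodup_range.sublist (List.drop_sublist _ _))
  have key : ∀ (x : SpV g) (j : Fin g),
      (phi g x).1 j = (if (j : ℕ) = 0 then x.1 j - x.2 j else x.1 j + x.2 j) ∧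
      (phi g x).2 j = (if (j : ℕ) = 0 then x.2 j else x.1 j + 2 * x.2 j) := by
    intro x j
    have := prod_apply_coord g _ hnd (Tv g (stdA g 0) x) j
    rw [phi, Module.End.mul_apply, this.1, this.2, (Tv_A_apply g 0 x j).1, (Tv_A_apply g 0 x j).2]
    simp only [hmem]
    by_cases h : (j : ℕ) = 0 <;> simp [h]
  ext x
  rw [LinearMap.mem_ker, LinearMap.sub_apply, LinearMap.id_apply, sub_eq_zero,
    Submodule.mem_span_singleton]
  constructor
  · intro hx
    have h1 : ∀ j : Fin g, x.2 j = 0 ∧ ((j : ℕ) ≠ 0 → x.1 j = 0) := by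
      intro j
      have k := key x j
      rw [hx] at k
      by_cases h : (j : ℕ) = 0
      · simp only [h, if_true] at k
        exact ⟨by linarith [k.1], fun h' => absurd h h'⟩
      · simp only [h, if_false] at k
        exact ⟨by linarith [k.1], fun _ => by linarith [k.1, k.2]⟩
    refine ⟨x.1 ⟨0, hg⟩, ?_⟩
    refine Prod.ext (funext fun j => ?_) (funext fun j => ?_)
    · by_cases h : (j : ℕ) = 0
      · have : j = ⟨0, hg⟩ := Fin.ext h
        subst this
        simp [stdA]
      · simp [stdA, h, (h1 j).2 h]
    · simp [stdA, (h1 j).1]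
  · rintro ⟨a, rfl⟩
    refine Prod.ext (funext fun j => ?_) (funext fun j => ?_)
    · rw [(key _ j).1]; simp [stdA]
    · rw [(key _ j).2]
      by_cases h : (j : ℕ) = 0 <;> simp [stdA, h]

/-- For g ≥ 1, the fixed subspace ker(φ − id) is one-dimensional and is spanned by a₁. -/
theorem stmt_2 (g : ℕ) (hg : 1 ≤ g) :
    Module.finrank ℚ (LinearMap.ker (phi g - LinearMap.id)) = 1 ∧
      LinearMap.ker (phi g - LinearMap.id) = Submodule.span ℚ {stdA g 0} := by
  refine ⟨?_, phi_ker g hg⟩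
  rw [phi_ker g hg]
  apply finrank_span_singleton
  intro h
  have := congrFun (congrArg Prod.fst h) ⟨0, hg⟩
  simp [stdA] at this
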